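/- There exists a constant C > 0 (depending only on p and d) such that for every n ∈ ℕ and every x ∈ C₀([0,1], G(ℝ^d)): ‖Υ_n(x)‖_{φ_p} ≤ C ‖x‖_{φ_p}. -/

import Mathlib

/-! The proof rests on two facts.

*The modulus.* The pointwise infimum of the convex majorants of `ζ^p` equals `ζ^p` on `(0,1]`
(`convEnv_eq`), because `ζ` is increasing and grows at most linearly to the right of each point;
hence `φ_p = ζ` there. Since the integrand of `ζ` satisfies `F(λu) ≥ λ^{-1/2} F(u)` for `λ ≤ 1`,
the function `ζ` satisfies `√λ ζ(h) ≤ ζ(λh)` (`zeta_scale`), and it is increasing.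

*The group.* Exponentials generate the group (`exists_list`), so the homogeneous norm is
subadditive. The path `t ↦ δ_t g` is `½`-Hölder with constant a multiple of `‖g‖`
(`gnorm_dil_inc_le`): for `0 ≤ a ≤ b ≤ 1` and `c = √(b² − a²)`,
`δ_a(g)⁻¹ ⊗ δ_b(g) = exp((b − a − c) g¹) ⊗ δ_c(g)`, and both `|g¹| ≤ ‖g‖` and `c ≤ √2 √(b − a)`.

Inside one dyadic interval of length `h = 2^{-n}`, the increment of `Υ_n(x)` over a piece of length
`λh` is therefore at most `3 √λ ‖x‖ ζ(h) ≤ 3 ‖x‖ ζ(λh)`. A general increment is a product of two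
such pieces and an increment of `x` between dyadic points, so monotonicity of `ζ` gives the
constant `3 + 1 + 3 = 7`. -/


noncomputable section

open scoped BigOperators
open MeasureTheory Filter Matrix

namespace PaperFV

/-- `Vec d` is `ℝ^d`. -/
abbrev Vec (d : ℕ) := Fin d → ℝ

/-- `Mat d` is the space of real `d × d` matrices. -/
abbrev Mat (d : ℕ) := Matrix (Fin d) (Fin d) ℝ

/-- The Euclidean norm on `ℝ^d`. -/
def enorm {d : ℕ} (x : Vec d) : ℝ := Real.sqrt (∑ i, (x i) ^ 2)

/-- The defining condition of the step-2 free nilpotent group over `ℝ^d`: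
the symmetric part of the second component equals `½ g¹ (g¹)ᵀ`. -/
def IsG {d : ℕ} (g : Vec d × Mat d) : Prop :=
  g.2 + g.2ᵀ = Matrix.vecMulVec g.1 g.1

/-- The step-2 free nilpotent group `G(ℝ^d)`. -/
def G (d : ℕ) : Type := { g : Vec d × Mat d // IsG g }

namespace G

variable {d : ℕ}

/-- Group multiplication `g ⊗ h = (g¹ + h¹, g² + g¹ (h¹)ᵀ + h²)`. -/
def mul (g h : G d) : G d :=
  ⟨(g.1.1 + h.1.1, g.1.2 + Matrix.vecMulVec g.1.1 h.1.1 + h.1.2), by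
    have hg := g.2
    have hh := h.2
    simp only [IsG] at *
    ext i j
    have hg' := congrFun (congrFun hg i) j
    have hh' := congrFun (congrFun hh i) j
    simp only [Matrix.add_apply, Matrix.transpose_apply, Matrix.vecMulVec_apply,
      Pi.add_apply] at *
    nlinarith [hg', hh']⟩

/-- The identity element `e = (0, 0)`. -/
def one : G d :=
  ⟨(0, 0), by
    ext i j
    simp [IsG, Matrix.vecMulVec_apply]⟩

/-- The inverse `g⁻¹ = (−g¹, g¹ (g¹)ᵀ − g²)`. -/
def inv (g : G d) : G d :=
  ⟨(-g.1.1, Matrix.vecMulVec g.1.1 g.1.1 - g.1.2), by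
    have hg := g.2
    simp only [IsG] at *
    ext i j
    have hg' := congrFun (congrFun hg i) j
    simp only [Matrix.add_apply, Matrix.sub_apply, Matrix.transpose_apply,
      Matrix.vecMulVec_apply, Pi.neg_apply] at *
    nlinarith [hg']⟩

/-- `exp x = (x, ½ x xᵀ)`. -/
def gexp (x : Vec d) : G d :=
  ⟨(x, (2⁻¹ : ℝ) • Matrix.vecMulVec x x), by
    ext i j
    simp only [IsG, Matrix.add_apply, Matrix.transpose_apply, Matrix.smul_apply,
      Matrix.vecMulVec_apply, smul_eq_mul]
    ring⟩

/-- The dilation `δ_t (g¹, g²) = (t g¹, t² g²)`. -/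
def dil (t : ℝ) (g : G d) : G d :=
  ⟨(t • g.1.1, (t ^ 2) • g.1.2), by
    have hg := g.2
    simp only [IsG] at *
    ext i j
    have hg' := congrFun (congrFun hg i) j
    simp only [Matrix.add_apply, Matrix.transpose_apply, Matrix.smul_apply,
      Matrix.vecMulVec_apply, Pi.smul_apply, smul_eq_mul] at *
    nlinarith [hg']⟩

/-- Product of a list of group elements. -/
def prodL : List (G d) → G d
  | [] => one
  | g :: l => mul g (prodL l)

/-- The homogeneous (Carnot–Carathéodory) norm:
`‖g‖ = inf { Σ |xᵢ| : exp(x₁) ⊗ ⋯ ⊗ exp(xₙ) = g }`. -/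
def gnorm (g : G d) : ℝ :=
  sInf { r | ∃ l : List (Vec d), prodL (l.map gexp) = g ∧ r = (l.map enorm).sum }

/-- The left-invariant distance `d(g, h) = ‖h⁻¹ ⊗ g‖`. -/
def gdist (g h : G d) : ℝ := gnorm (mul (inv h) g)

end G

open G

/-- A continuous `G(ℝ^d)`-valued path on `[0,1]` started at the identity. -/
def IsPath {d : ℕ} (x : ℝ → G d) : Prop :=
  ContinuousOn (fun t => (x t).1) (Set.Icc 0 1) ∧ x 0 = one

/-- The increment `x_{s,t} = x_s⁻¹ ⊗ x_t`. -/
def inc {d : ℕ} (x : ℝ → G d) (s t : ℝ) : G d := mul (inv (x s)) (x t)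

/-- The set of values whose supremum is `d_∞(x,y)`. -/
def dInfSet {d : ℕ} (x y : ℝ → G d) : Set ℝ :=
  { r | ∃ s t : ℝ, 0 ≤ s ∧ s < t ∧ t ≤ 1 ∧
      r = gnorm (mul (inv (inc x s t)) (inc y s t)) }

/-- `d_∞(x,y) = sup_{0 ≤ s < t ≤ 1} ‖x_{s,t}⁻¹ ⊗ y_{s,t}‖`. -/
def dInf {d : ℕ} (x y : ℝ → G d) : ℝ := sSup (dInfSet x y)

/-- The set of values whose supremum is `d_φ(x,y)`. -/
def dPhiSet {d : ℕ} (φ : ℝ → ℝ) (x y : ℝ → G d) : Set ℝ :=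
  { r | ∃ s t : ℝ, 0 ≤ s ∧ s < t ∧ t ≤ 1 ∧
      r = gnorm (mul (inv (inc x s t)) (inc y s t)) / φ (t - s) }

/-- `d_φ(x,y) = sup_{0 ≤ s < t ≤ 1} ‖x_{s,t}⁻¹ ⊗ y_{s,t}‖ / φ(t-s)`. -/
def dPhi {d : ℕ} (φ : ℝ → ℝ) (x y : ℝ → G d) : ℝ := sSup (dPhiSet φ x y)

/-- The set of values whose supremum is `‖x‖_φ`. -/
def normPhiSet {d : ℕ} (φ : ℝ → ℝ) (x : ℝ → G d) : Set ℝ :=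
  { r | ∃ s t : ℝ, 0 ≤ s ∧ s < t ∧ t ≤ 1 ∧ r = gnorm (inc x s t) / φ (t - s) }

/-- `‖x‖_φ = sup_{0 ≤ s < t ≤ 1} ‖x_{s,t}‖ / φ(t-s)`. -/
def normPhi {d : ℕ} (φ : ℝ → ℝ) (x : ℝ → G d) : ℝ := sSup (normPhiSet φ x)

/-- `‖x‖_∞ = sup_{0 ≤ s < t ≤ 1} ‖x_{s,t}‖`. -/
def normInf {d : ℕ} (x : ℝ → G d) : ℝ :=
  sSup { r | ∃ s t : ℝ, 0 ≤ s ∧ s < t ∧ t ≤ 1 ∧ r = gnorm (inc x s t) }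

/-- The class `Ξ_p` of functions `φ : [0,1] → [0,∞)` with `φ(0) = 0` such that
`φ^p` is strictly increasing and convex. -/
def Xi (p : ℝ) (φ : ℝ → ℝ) : Prop :=
  φ 0 = 0 ∧ (∀ x ∈ Set.Icc (0:ℝ) 1, 0 ≤ φ x) ∧
    StrictMonoOn (fun x => φ x ^ p) (Set.Icc (0:ℝ) 1) ∧
    ConvexOn ℝ (Set.Icc (0:ℝ) 1) (fun x => φ x ^ p)

/-- `ζ(x) = (1/(2√2)) ∫₀^x √( log(1 + 1/u²) / u ) du`. -/
def zeta (x : ℝ) : ℝ :=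
  (1 / (2 * Real.sqrt 2)) * ∫ u in (0:ℝ)..x, Real.sqrt (Real.log (1 + 1 / u ^ 2) / u)

/-- The smallest convex function on `[0,1]` dominating `ζ^p`. -/
def convEnv (p : ℝ) (x : ℝ) : ℝ :=
  sInf { y | ∃ g : ℝ → ℝ, ConvexOn ℝ (Set.Icc (0:ℝ) 1) g ∧
    (∀ z ∈ Set.Icc (0:ℝ) 1, zeta z ^ p ≤ g z) ∧ y = g x }

/-- `φ_p`, the `p`-th root of the smallest convex function on `[0,1]` dominating `ζ^p`. -/
def phiP (p : ℝ) (x : ℝ) : ℝ := convEnv p x ^ (1 / p)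

/-- The piecewise "linear" (with dilated increments) dyadic approximation `Υ_n(x)`:
`Υ_n(x)_{k/2ⁿ + t} = x_{k/2ⁿ} ⊗ δ_{2ⁿ t}(x_{k/2ⁿ, (k+1)/2ⁿ})` for `t ∈ [0, 2⁻ⁿ]`. -/
def upsilon {d : ℕ} (n : ℕ) (x : ℝ → G d) : ℝ → G d := fun u =>
  let k : ℤ := ⌊(2 : ℝ) ^ n * u⌋
  mul (x ((k : ℝ) / 2 ^ n))
    (dil ((2 : ℝ) ^ n * u - (k : ℝ)) (inc x ((k : ℝ) / 2 ^ n) (((k : ℝ) + 1) / 2 ^ n)))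


/-! ### The homogeneous norm -/

section HomogeneousNorm

variable {d : ℕ}

lemma G_ext {g h : G d} (h1 : g.1.1 = h.1.1) (h2 : g.1.2 = h.1.2) : g = h :=
  Subtype.ext (Prod.ext h1 h2)

lemma mul_assoc' (g h k : G d) : mul (mul g h) k = mul g (mul h k) := by
  apply G_ext
  · simp [mul, add_assoc]
  · ext i j
    simp [mul, Matrix.vecMulVec_apply]
    ring

lemma one_mul' (g : G d) : mul one g = g := by
  apply G_ext
  · simp [mul, G.one]
  · ext i j
    simp [mul, G.one]

lemma inv_mul_self' (g : G d) : mul (inv g) g = one := by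
  apply G_ext
  · simp [mul, G.one, G.inv]
  · ext i j
    simp [mul, G.one, G.inv, Matrix.vecMulVec_apply]
    ring

lemma mul_inv_self' (g : G d) : mul g (inv g) = one := by
  apply G_ext
  · simp [mul, G.one, G.inv]
  · ext i j
    simp [mul, G.one, G.inv, Matrix.vecMulVec_apply]
    ring

lemma inv_mul' (g h : G d) : inv (mul g h) = mul (inv h) (inv g) := by
  apply G_ext
  · simp [mul, G.inv, add_comm]
  · ext i j
    simp [mul, G.inv, Matrix.vecMulVec_apply]
    ring

lemma dil_zero (g : G d) : dil 0 g = one := by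
  apply G_ext <;> simp [dil, G.one]

lemma dil_one (g : G d) : dil 1 g = g := by
  apply G_ext <;> simp [dil]

lemma inv_one' : inv (one : G d) = one := by
  apply G_ext
  · simp [G.inv, G.one]
  · ext i j
    simp [G.inv, G.one]

lemma enorm_eq (x : Vec d) : enorm x = ‖(WithLp.toLp 2 x : EuclideanSpace ℝ (Fin d))‖ := by
  simp [enorm, EuclideanSpace.norm_eq]

lemma enorm_nonneg (x : Vec d) : 0 ≤ enorm x := Real.sqrt_nonneg _

lemma enorm_add_le (x y : Vec d) : enorm (x + y) ≤ enorm x + enorm y := by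
  simp only [enorm_eq, WithLp.toLp_add]
  exact norm_add_le _ _

lemma enorm_smul (c : ℝ) (x : Vec d) : enorm (c • x) = |c| * enorm x := by
  simp only [enorm_eq, WithLp.toLp_smul, norm_smul, Real.norm_eq_abs]

lemma prodL_append (l m : List (G d)) : prodL (l ++ m) = mul (prodL l) (prodL m) := by
  induction l with
  | nil => simp [prodL, one_mul']
  | cons a l ih => simp [prodL, ih, mul_assoc']

/-- Commutators of exponentials span the centre: the partial sums
`∑_{i ∈ s} (eᵢ vᵢᵀ − vᵢ eᵢᵀ)` are second levels of products of exponentials. -/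
lemma exists_list_center (v : Fin d → Vec d) (s : Finset (Fin d)) :
    ∃ l : List (Vec d), (prodL (l.map gexp)).1.1 = 0 ∧
      (prodL (l.map gexp)).1.2 = ∑ i ∈ s, (Matrix.vecMulVec (Pi.single i 1) (v i)
        - Matrix.vecMulVec (v i) (Pi.single i 1)) := by
  classical
  induction s using Finset.induction_on with
  | empty => exact ⟨[], by simp [prodL, G.one], by simp [prodL, G.one]⟩
  | insert i s hi ih =>
    obtain ⟨l, h1, h2⟩ := ih
    refine ⟨Pi.single i 1 :: v i :: (-Pi.single i 1) :: (-v i) :: l, ?_, ?_⟩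
    · simp [prodL, mul, gexp, h1]
    · rw [Finset.sum_insert hi, ← h2]
      ext a b
      simp [prodL, mul, gexp, Matrix.vecMulVec_apply, h1]
      ring

/-- Chow's theorem for the step-2 free nilpotent group: exponentials generate it, so the set
defining the homogeneous norm is nonempty. -/
lemma exists_list (g : G d) : ∃ l : List (Vec d), prodL (l.map gexp) = g := by
  -- the antisymmetric part of `g²` is half the sum of `eᵢ aᵢᵀ − aᵢ eᵢᵀ` over its rows `aᵢ`
  obtain ⟨l, h1, h2⟩ := exists_list_center
    (fun i j => (1 / 2) * (g.1.2 i j - (1 / 2) * (g.1.1 i * g.1.1 j))) Finset.univ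
  refine ⟨g.1.1 :: l, G_ext ?_ ?_⟩
  · simp [prodL, mul, gexp, h1]
  · have hg := g.2
    ext a b
    have hab := congrFun (congrFun hg a) b
    simp only [Matrix.add_apply, Matrix.transpose_apply, Matrix.vecMulVec_apply] at hab
    simp only [List.map_cons, prodL, mul, h1, h2, gexp, Matrix.add_apply, Matrix.smul_apply,
      Matrix.vecMulVec_apply, Matrix.sum_apply, Matrix.sub_apply, Pi.single_apply,
      Finset.sum_sub_distrib, Pi.zero_apply, smul_eq_mul]
    simp
    linarith

lemma gnorm_nonneg (g : G d) : 0 ≤ gnorm g := by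
  apply Real.sInf_nonneg
  rintro r ⟨l, -, rfl⟩
  apply List.sum_nonneg
  simp only [List.mem_map]
  rintro _ ⟨x, -, rfl⟩
  exact enorm_nonneg x

lemma gnorm_le (l : List (Vec d)) : gnorm (prodL (l.map gexp)) ≤ (l.map enorm).sum := by
  refine csInf_le ⟨0, ?_⟩ ⟨l, rfl, rfl⟩
  rintro r ⟨l, -, rfl⟩
  apply List.sum_nonneg
  simp only [List.mem_map]
  rintro _ ⟨x, -, rfl⟩
  exact enorm_nonneg x

lemma exists_list_lt (g : G d) {ε : ℝ} (hε : 0 < ε) :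
    ∃ l : List (Vec d), prodL (l.map gexp) = g ∧ (l.map enorm).sum < gnorm g + ε := by
  obtain ⟨l₀, h₀⟩ := exists_list g
  obtain ⟨r, ⟨l, hl, rfl⟩, hr⟩ := Real.lt_sInf_add_pos
    (s := { r | ∃ l : List (Vec d), prodL (l.map gexp) = g ∧ r = (l.map enorm).sum })
    ⟨_, l₀, h₀, rfl⟩ hε
  exact ⟨l, hl, hr⟩

lemma gnorm_mul_le (g h : G d) : gnorm (mul g h) ≤ gnorm g + gnorm h := by
  apply le_of_forall_pos_le_add
  intro ε hε
  obtain ⟨l, rfl, hl⟩ := exists_list_lt g (half_pos hε)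
  obtain ⟨m, rfl, hm⟩ := exists_list_lt h (half_pos hε)
  rw [← prodL_append, ← List.map_append]
  refine (gnorm_le _).trans ?_
  rw [List.map_append, List.sum_append]
  linarith

lemma gnorm_gexp_le (x : Vec d) : gnorm (gexp x) ≤ enorm x := by
  have h := gnorm_le [x]
  have e : prodL ([x].map gexp) = gexp x := by
    apply G_ext
    · simp [prodL, mul, G.one]
    · ext i j
      simp [prodL, mul, G.one]
  rw [e] at h
  simpa using h

lemma gnorm_one_le : gnorm (one : G d) ≤ 0 := by
  simpa [prodL] using gnorm_le ([] : List (Vec d))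

lemma dil_prodL (c : ℝ) (l : List (Vec d)) :
    dil c (prodL (l.map gexp)) = prodL ((l.map (c • ·)).map gexp) := by
  induction l with
  | nil => apply G_ext <;> simp [dil, prodL, G.one]
  | cons a l ih =>
    simp only [List.map_cons, prodL] at ih ⊢
    rw [← ih]
    apply G_ext
    · simp [dil, mul, gexp]
    · ext i j
      simp [dil, mul, gexp, Matrix.vecMulVec_apply]
      ring

lemma gnorm_dil_le {c : ℝ} (hc : 0 ≤ c) (g : G d) : gnorm (dil c g) ≤ c * gnorm g := by
  apply le_of_forall_pos_le_add
  intro ε hε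
  have hc1 : 0 < c + 1 := by linarith
  obtain ⟨l, hl, hlt⟩ := exists_list_lt g (div_pos hε hc1)
  have hsum : ((l.map (c • ·)).map enorm).sum = c * (l.map enorm).sum := by
    rw [List.map_map, ← List.sum_map_mul_left]
    congr 1
    apply List.map_congr_left
    intro x _
    simp [enorm_smul, abs_of_nonneg hc]
  calc gnorm (dil c g) ≤ c * (l.map enorm).sum := by
        rw [← hl, dil_prodL, ← hsum]
        exact gnorm_le _
    _ ≤ c * (gnorm g + ε / (c + 1)) := mul_le_mul_of_nonneg_left hlt.le hc
    _ = c * gnorm g + c / (c + 1) * ε := by ring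
    _ ≤ c * gnorm g + 1 * ε := by
        have : c / (c + 1) ≤ 1 := by rw [div_le_one hc1]; linarith
        gcongr
    _ = c * gnorm g + ε := by ring

lemma enorm_le_gnorm (g : G d) : enorm g.1.1 ≤ gnorm g := by
  apply le_of_forall_pos_le_add
  intro ε hε
  obtain ⟨l, rfl, hlt⟩ := exists_list_lt g hε
  refine le_trans ?_ hlt.le
  clear hlt
  induction l with
  | nil => simp [prodL, G.one, enorm]
  | cons a l ih =>
    simp only [List.map_cons, prodL, List.sum_cons]
    exact (enorm_add_le _ _).trans (add_le_add le_rfl ih)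

/-- The dilation path `t ↦ δ_t g` is `½`-Hölder: with `c = √(b² − a²)`, its increment
`δ_a(g)⁻¹ ⊗ δ_b(g)` equals `exp((b − a − c) g¹) ⊗ δ_c(g)`. -/
lemma gnorm_dil_inc_le {a b : ℝ} (ha : 0 ≤ a) (hab : a ≤ b) (hb : b ≤ 1) (g : G d) :
    gnorm (mul (inv (dil a g)) (dil b g)) ≤ 3 * (√(b - a) * gnorm g) := by
  have hsq : 0 ≤ b ^ 2 - a ^ 2 := by nlinarith
  set c := √(b ^ 2 - a ^ 2) with hc
  have hc0 : 0 ≤ c := Real.sqrt_nonneg _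
  have hc2 : c ^ 2 = b ^ 2 - a ^ 2 := Real.sq_sqrt hsq
  have hbac : b - a ≤ c := Real.le_sqrt_of_sq_le (by nlinarith)
  have hg := g.2
  have key : mul (inv (dil a g)) (dil b g) = mul (gexp ((b - a - c) • g.1.1)) (dil c g) := by
    apply G_ext
    · ext i
      simp [mul, G.inv, dil, gexp]
      ring
    · ext i j
      have hij := congrFun (congrFun hg i) j
      simp only [Matrix.add_apply, Matrix.transpose_apply, Matrix.vecMulVec_apply] at hij
      simp [mul, G.inv, dil, gexp, Matrix.vecMulVec_apply]
      linear_combination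
        (g.1.1 i * g.1.1 j / 2 - g.1.2 i j) * hc2
  have h1 : gnorm (gexp ((b - a - c) • g.1.1)) ≤ c * gnorm g := by
    refine (gnorm_gexp_le _).trans ?_
    rw [enorm_smul, abs_of_nonpos (by linarith)]
    exact mul_le_mul (by linarith) (enorm_le_gnorm g) (enorm_nonneg _) hc0
  have h2 := gnorm_dil_le hc0 g
  have h3 : 2 * c ≤ 3 * √(b - a) := by
    have hs := Real.sq_sqrt (sub_nonneg.2 hab)
    have hs0 := Real.sqrt_nonneg (b - a)
    apply (sq_le_sq₀ (by positivity) (by positivity)).1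
    nlinarith
  calc gnorm (mul (inv (dil a g)) (dil b g)) ≤ c * gnorm g + c * gnorm g := by
        rw [key]
        exact (gnorm_mul_le _ _).trans (add_le_add h1 h2)
    _ = 2 * c * gnorm g := by ring
    _ ≤ 3 * √(b - a) * gnorm g := mul_le_mul_of_nonneg_right h3 (gnorm_nonneg g)
    _ = _ := by ring

lemma gnorm_dil_sqrt_le {b : ℝ} (h0 : 0 ≤ b) (hb : b ≤ 1) (g : G d) :
    gnorm (dil b g) ≤ 3 * (√b * gnorm g) := by
  have h := gnorm_dil_inc_le le_rfl h0 hb g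
  rwa [dil_zero, inv_one', one_mul', sub_zero] at h

end HomogeneousNorm

/-! ### The modulus -/

/-- The integrand `√(log(1 + 1/u²)/u)` of `ζ`. -/
def zetaIntegrand (u : ℝ) : ℝ := Real.sqrt (Real.log (1 + 1 / u ^ 2) / u)

lemma zetaIntegrand_pos {u : ℝ} (hu : 0 < u) : 0 < zetaIntegrand u := by
  apply Real.sqrt_pos.2
  have : 0 < 1 / u ^ 2 := by positivity
  exact div_pos (Real.log_pos (by linarith)) hu

lemma zetaIntegrand_anti {u v : ℝ} (hu : 0 < u) (huv : u ≤ v) :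
    zetaIntegrand v ≤ zetaIntegrand u := by
  have hv : 0 < v := hu.trans_le huv
  have : 0 < 1 / u ^ 2 := by positivity
  apply Real.sqrt_le_sqrt
  have h0 : 0 ≤ Real.log (1 + 1 / u ^ 2) := Real.log_nonneg (by linarith)
  gcongr

/-- Scaling of the integrand: `F(λu) ≥ λ^{-1/2} F(u)` for `λ ∈ (0,1]`. -/
lemma zetaIntegrand_scale {l u : ℝ} (hl : 0 < l) (hl1 : l ≤ 1) (hu : 0 < u) :
    √l * zetaIntegrand u ≤ l * zetaIntegrand (l * u) := by
  have hlu : l * u ≤ u := by nlinarith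
  have hlu0 : 0 < l * u := by positivity
  have hsl : √l * √l = l := Real.mul_self_sqrt hl.le
  have : zetaIntegrand u ≤ √l * zetaIntegrand (l * u) := by
    unfold zetaIntegrand
    rw [← Real.sqrt_mul hl.le]
    apply Real.sqrt_le_sqrt
    have e : l * (Real.log (1 + 1 / (l * u) ^ 2) / (l * u))
        = Real.log (1 + 1 / (l * u) ^ 2) / u := by
      field_simp
    rw [e]
    have : 0 < 1 / u ^ 2 := by positivity
    gcongr
  calc √l * zetaIntegrand u ≤ √l * (√l * zetaIntegrand (l * u)) := by gcongr
    _ = l * zetaIntegrand (l * u) := by rw [← mul_assoc, hsl]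

/-- Near `0` the integrand is `O(u^{-3/4})`, because `log y ≤ 4 y^{1/4}`. -/
lemma zetaIntegrand_le {u : ℝ} (hu : 0 < u) (hu1 : u ≤ 1) :
    zetaIntegrand u ≤ 3 * u ^ (-(3 / 4) : ℝ) := by
  have hy : 1 ≤ 1 / u ^ 2 := by
    rw [le_div_iff₀ (by positivity)]
    nlinarith
  have h1 : Real.log (1 + 1 / u ^ 2) ≤ 8 * u ^ (-(1 / 2) : ℝ) := by
    have h2 : Real.log (1 + 1 / u ^ 2) ≤ (1 + 1 / u ^ 2) ^ (1 / 4 : ℝ) / (1 / 4) :=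
      Real.log_le_rpow_div (by positivity) (by norm_num)
    have h3 : (1 + 1 / u ^ 2) ^ (1 / 4 : ℝ) ≤ (16 * (1 / u ^ 2)) ^ (1 / 4 : ℝ) :=
      Real.rpow_le_rpow (by positivity) (by linarith) (by norm_num)
    have h4 : (16 * (1 / u ^ 2)) ^ (1 / 4 : ℝ) = 2 * u ^ (-(1 / 2) : ℝ) := by
      rw [Real.mul_rpow (by norm_num) (by positivity), one_div (u ^ 2), ← Real.rpow_natCast,
        ← Real.rpow_neg hu.le, ← Real.rpow_mul hu.le]
      have : (16 : ℝ) = 2 ^ (4 : ℝ) := by norm_num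
      rw [this, ← Real.rpow_mul (by norm_num)]
      norm_num
    linarith
  unfold zetaIntegrand
  apply Real.sqrt_le_iff.2
  refine ⟨by positivity, ?_⟩
  rw [div_le_iff₀ hu]
  have e : (3 * u ^ (-(3 / 4) : ℝ)) ^ 2 * u = 9 * u ^ (-(1 / 2) : ℝ) := by
    rw [mul_pow, ← Real.rpow_natCast (u ^ (-(3 / 4) : ℝ)), ← Real.rpow_mul hu.le, mul_assoc]
    nth_rewrite 2 [← Real.rpow_one u]
    rw [← Real.rpow_add hu]
    norm_num
  rw [e]
  have : 0 ≤ u ^ (-(1 / 2) : ℝ) := by positivity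
  linarith

lemma zetaIntegrand_intervalIntegrable {x : ℝ} (hx : 0 ≤ x) (hx1 : x ≤ 1) :
    IntervalIntegrable zetaIntegrand volume 0 x := by
  have hi : IntervalIntegrable (fun u : ℝ => 3 * u ^ (-(3 / 4) : ℝ)) volume 0 x :=
    (intervalIntegral.intervalIntegrable_rpow' (by norm_num)).const_mul 3
  refine hi.mono_fun ?_ ?_
  · apply Measurable.aestronglyMeasurable
    unfold zetaIntegrand
    fun_prop
  · refine (ae_restrict_mem measurableSet_uIoc).mono fun u hu => ?_
    rw [Set.uIoc_of_le hx] at hu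
    have h := zetaIntegrand_le hu.1 (hu.2.trans hx1)
    simp only [Real.norm_eq_abs]
    rw [abs_of_pos (zetaIntegrand_pos hu.1)]
    exact h.trans (le_abs_self _)

lemma zeta_eq (x : ℝ) :
    zeta x = (1 / (2 * Real.sqrt 2)) * ∫ u in (0:ℝ)..x, zetaIntegrand u := rfl

lemma zeta_pos {x : ℝ} (hx : 0 < x) (hx1 : x ≤ 1) : 0 < zeta x := by
  rw [zeta_eq]
  apply mul_pos (by positivity)
  exact intervalIntegral.intervalIntegral_pos_of_pos_on
    (zetaIntegrand_intervalIntegrable hx.le hx1) (fun u hu => zetaIntegrand_pos hu.1) hx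

lemma zeta_nonneg {x : ℝ} (hx : 0 ≤ x) (hx1 : x ≤ 1) : 0 ≤ zeta x := by
  rcases hx.eq_or_lt with rfl | h
  · simp [zeta]
  · exact (zeta_pos h hx1).le

lemma zeta_sub {x y : ℝ} (hx : 0 ≤ x) (hxy : x ≤ y) (hy : y ≤ 1) :
    zeta y - zeta x = (1 / (2 * Real.sqrt 2)) * ∫ u in x..y, zetaIntegrand u := by
  rw [zeta_eq, zeta_eq, ← mul_sub, intervalIntegral.integral_interval_sub_left
    (zetaIntegrand_intervalIntegrable (hx.trans hxy) hy)
    (zetaIntegrand_intervalIntegrable hx (hxy.trans hy))]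

lemma zeta_mono {x y : ℝ} (hx : 0 ≤ x) (hxy : x ≤ y) (hy : y ≤ 1) : zeta x ≤ zeta y := by
  have h := zeta_sub hx hxy hy
  have : 0 ≤ ∫ u in x..y, zetaIntegrand u :=
    intervalIntegral.integral_nonneg hxy fun u _ => Real.sqrt_nonneg _
  have : 0 ≤ (1 / (2 * Real.sqrt 2)) * ∫ u in x..y, zetaIntegrand u := by positivity
  linarith

/-- `ζ` is concave, so to the right of `x` it lies below its tangent at `x`, hence below the
steeper line of slope `F(x)`, where `F` is the integrand. -/
lemma zeta_le_tangent {x y : ℝ} (hx : 0 < x) (hxy : x ≤ y) (hy : y ≤ 1) :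
    zeta y ≤ zeta x + zetaIntegrand x * (y - x) := by
  have h := zeta_sub hx.le hxy hy
  have hI : ∫ u in x..y, zetaIntegrand u ≤ ∫ _ in x..y, zetaIntegrand x := by
    apply intervalIntegral.integral_mono_on hxy
    · exact (zetaIntegrand_intervalIntegrable hx.le (hxy.trans hy)).symm.trans
        (zetaIntegrand_intervalIntegrable (hx.le.trans hxy) hy)
    · simp
    · intro u hu
      exact zetaIntegrand_anti hx hu.1
  have h0 : 0 ≤ ∫ u in x..y, zetaIntegrand u :=
    intervalIntegral.integral_nonneg hxy fun u _ => Real.sqrt_nonneg _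
  rw [intervalIntegral.integral_const, smul_eq_mul] at hI
  have hc : 1 / (2 * Real.sqrt 2) ≤ 1 := by
    have : (1 : ℝ) ≤ √2 := Real.one_le_sqrt.2 (by norm_num)
    rw [div_le_one (by positivity)]
    linarith
  have : (1 / (2 * Real.sqrt 2)) * ∫ u in x..y, zetaIntegrand u
      ≤ 1 * ∫ u in x..y, zetaIntegrand u := mul_le_mul_of_nonneg_right hc h0
  linarith

lemma zeta_scale {l h : ℝ} (hl : 0 < l) (hl1 : l ≤ 1) (hh : 0 < h) (hh1 : h ≤ 1) :
    √l * zeta h ≤ zeta (l * h) := by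
  have hlh : l * h ≤ 1 := by nlinarith
  have hsub : l * ∫ u in (0:ℝ)..h, zetaIntegrand (l * u)
      = ∫ u in (0:ℝ)..(l * h), zetaIntegrand u := by
    rw [intervalIntegral.integral_comp_mul_left _ hl.ne', smul_eq_mul, mul_zero,
      mul_inv_cancel_left₀ hl.ne']
  have hint : IntervalIntegrable (fun u => zetaIntegrand (l * u)) volume 0 h := by
    have := (zetaIntegrand_intervalIntegrable (by positivity) hlh).comp_mul_left (c := l)
    simpa [hl.ne'] using this
  have hmono : ∫ u in (0:ℝ)..h, √l * zetaIntegrand u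
      ≤ ∫ u in (0:ℝ)..h, l * zetaIntegrand (l * u) := by
    apply intervalIntegral.integral_mono_on_of_le_Ioo hh.le
    · exact (zetaIntegrand_intervalIntegrable hh.le hh1).const_mul _
    · exact hint.const_mul _
    · intro u hu
      exact zetaIntegrand_scale hl hl1 hu.1
  rw [intervalIntegral.integral_const_mul, intervalIntegral.integral_const_mul, hsub] at hmono
  rw [zeta_eq, zeta_eq]
  calc _ = (1 / (2 * Real.sqrt 2)) * (√l * ∫ u in (0:ℝ)..h, zetaIntegrand u) := by ring
    _ ≤ _ := by gcongr

/-- The pointwise infimum of the convex majorants of `ζ^p` is `ζ^p` itself: since `ζ` grows at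
most linearly to the right of `x`, the convex function `(ζ(x) + F(x)|z − x|)^p` is a majorant
touching `ζ^p` at `x`. -/
lemma convEnv_eq {p x : ℝ} (hp : 1 ≤ p) (hx : 0 < x) (hx1 : x ≤ 1) :
    convEnv p x = zeta x ^ p := by
  have hz := zeta_pos hx hx1
  have hF := zetaIntegrand_pos hx
  have hlow : ∀ r ∈ { y | ∃ g : ℝ → ℝ, ConvexOn ℝ (Set.Icc (0:ℝ) 1) g ∧
      (∀ z ∈ Set.Icc (0:ℝ) 1, zeta z ^ p ≤ g z) ∧ y = g x }, zeta x ^ p ≤ r := by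
    rintro r ⟨g, -, hg, rfl⟩
    exact hg x ⟨hx.le, hx1⟩
  have hmem : zeta x ^ p ∈ { y | ∃ g : ℝ → ℝ, ConvexOn ℝ (Set.Icc (0:ℝ) 1) g ∧
      (∀ z ∈ Set.Icc (0:ℝ) 1, zeta z ^ p ≤ g z) ∧ y = g x } := by
    refine ⟨fun z => (zeta x + zetaIntegrand x * |z - x|) ^ p, ?_, ?_, by simp⟩
    · refine ⟨convex_Icc 0 1, fun u _ v _ a b ha hb hab => ?_⟩
      have hpos : ∀ w, 0 ≤ zeta x + zetaIntegrand x * |w - x| := fun w => by positivity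
      have habs : |(a • u + b • v) - x| ≤ a * |u - x| + b * |v - x| := by
        have e : (a • u + b • v) - x = a * (u - x) + b * (v - x) := by
          simp only [smul_eq_mul]
          linear_combination x * hab
        rw [e]
        refine (abs_add_le _ _).trans_eq ?_
        rw [abs_mul, abs_mul, abs_of_nonneg ha, abs_of_nonneg hb]
      have hconv := (convexOn_rpow hp).2 (hpos u) (hpos v) ha hb hab
      refine le_trans ?_ hconv
      refine Real.rpow_le_rpow (hpos _) ?_ (by linarith)
      simp only [smul_eq_mul] at habs ⊢
      have := mul_le_mul_of_nonneg_left habs hF.le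
      have e : zeta x = a * zeta x + b * zeta x := by rw [← add_mul, hab, one_mul]
      linarith
    · intro z hz01
      refine Real.rpow_le_rpow (zeta_nonneg hz01.1 hz01.2) ?_ (by linarith)
      rcases le_total z x with h | h
      · have h1 := zeta_mono hz01.1 h hx1
        have h2 : 0 ≤ zetaIntegrand x * |z - x| := by positivity
        linarith
      · rw [abs_of_nonneg (sub_nonneg.2 h)]
        exact zeta_le_tangent hx h hz01.2
  exact le_antisymm (csInf_le ⟨_, hlow⟩ hmem) (le_csInf ⟨_, hmem⟩ hlow)

lemma phiP_eq {p x : ℝ} (hp : 1 ≤ p) (hx : 0 < x) (hx1 : x ≤ 1) : phiP p x = zeta x := by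
  rw [phiP, convEnv_eq hp hx hx1, one_div, Real.rpow_rpow_inv (zeta_pos hx hx1).le (by linarith)]

/-! ### Increments of the dyadic approximation -/

lemma upsilon_apply {d : ℕ} (n : ℕ) (x : ℝ → G d) {k : ℤ} {u : ℝ} (hk : ⌊(2 : ℝ) ^ n * u⌋ = k) :
    upsilon n x u = mul (x ((k : ℝ) / 2 ^ n)) (dil ((2 : ℝ) ^ n * u - (k : ℝ))
      (inc x ((k : ℝ) / 2 ^ n) (((k : ℝ) + 1) / 2 ^ n))) := by
  subst hk
  rfl

lemma inc_upsilon_same {d : ℕ} (n : ℕ) (x : ℝ → G d) {k : ℤ} {s t : ℝ}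
    (hs : ⌊(2 : ℝ) ^ n * s⌋ = k) (ht : ⌊(2 : ℝ) ^ n * t⌋ = k) :
    inc (upsilon n x) s t =
      mul (inv (dil ((2 : ℝ) ^ n * s - k) (inc x ((k : ℝ) / 2 ^ n) (((k : ℝ) + 1) / 2 ^ n))))
        (dil ((2 : ℝ) ^ n * t - k) (inc x ((k : ℝ) / 2 ^ n) (((k : ℝ) + 1) / 2 ^ n))) := by
  rw [inc, upsilon_apply n x hs, upsilon_apply n x ht, inv_mul', mul_assoc',
    ← mul_assoc' (inv (x _)), inv_mul_self', one_mul']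

lemma inc_upsilon_ne {d : ℕ} (n : ℕ) (x : ℝ → G d) {k m : ℤ} {s t : ℝ}
    (hs : ⌊(2 : ℝ) ^ n * s⌋ = k) (ht : ⌊(2 : ℝ) ^ n * t⌋ = m) :
    inc (upsilon n x) s t =
      mul (mul (inv (dil ((2 : ℝ) ^ n * s - k)
          (inc x ((k : ℝ) / 2 ^ n) (((k : ℝ) + 1) / 2 ^ n))))
        (dil 1 (inc x ((k : ℝ) / 2 ^ n) (((k : ℝ) + 1) / 2 ^ n))))
      (mul (inc x (((k : ℝ) + 1) / 2 ^ n) ((m : ℝ) / 2 ^ n))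
        (dil ((2 : ℝ) ^ n * t - m) (inc x ((m : ℝ) / 2 ^ n) (((m : ℝ) + 1) / 2 ^ n)))) := by
  have cancel : ∀ g h : G d, mul g (mul (inv g) h) = h := fun g h => by
    rw [← mul_assoc', mul_inv_self', one_mul']
  rw [dil_one, inc, upsilon_apply n x hs, upsilon_apply n x ht, inv_mul', mul_assoc', mul_assoc']
  congr 1
  generalize dil _ (inc x ((m : ℝ) / 2 ^ n) (((m : ℝ) + 1) / 2 ^ n)) = g
  rw [inc, inc, mul_assoc', mul_assoc', cancel]

/-- `‖Υ_n(x)‖_{φ_p} ≤ C ‖x‖_{φ_p}` for all `n` and all paths `x`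
(formulated via upper bounds, so that the infinite-norm case is the trivial one). -/
theorem upsilon_normPhi_le (d : ℕ) (hd : 2 ≤ d) (p : ℝ) (hp : 2 < p ∧ p < 3) :
    ∃ C : ℝ, 0 < C ∧ ∀ (n : ℕ) (x : ℝ → G d), IsPath x →
      ∀ K : ℝ, (∀ r ∈ normPhiSet (phiP p) x, r ≤ K) →
        ∀ r ∈ normPhiSet (phiP p) (upsilon n x), r ≤ C * K := by
  have hp1 : 1 ≤ p := by linarith [hp.1]
  refine ⟨7, by norm_num, ?_⟩
  rintro n x - K hK r ⟨s, t, hs0, hst, ht1, rfl⟩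
  have hN : (0 : ℝ) < 2 ^ n := by positivity
  have hN1 : (1 : ℝ) ≤ 2 ^ n := one_le_pow₀ (by norm_num)
  -- the hypothesis on `x`, cleared of the (positive) denominator `φ_p = ζ`
  have hx : ∀ a b : ℝ, 0 ≤ a → a < b → b ≤ 1 → gnorm (inc x a b) ≤ K * zeta (b - a) := by
    intro a b ha hab hb
    have h := hK _ ⟨a, b, ha, hab, hb, rfl⟩
    rw [phiP_eq hp1 (by linarith) (by linarith)] at h
    exact (div_le_iff₀ (zeta_pos (by linarith) (by linarith))).1 h
  have hK0 : 0 ≤ K := by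
    have h := (gnorm_nonneg _).trans (hx 0 1 le_rfl one_pos le_rfl)
    have hz : 0 < zeta (1 - 0) := zeta_pos (by norm_num) (by norm_num)
    exact nonneg_of_mul_nonneg_left h hz
  have hz := zeta_pos (sub_pos.2 hst) (by linarith)
  rw [phiP_eq hp1 (sub_pos.2 hst) (by linarith), div_le_iff₀ hz]
  -- a piece of relative length `l` of the dyadic interval starting at `k / 2 ^ n`
  have piece : ∀ (k : ℤ) (l : ℝ), 0 ≤ k → (k : ℝ) + 1 ≤ 2 ^ n → 0 ≤ l → l ≤ 1 →
      l / 2 ^ n ≤ t - s →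
      √l * gnorm (inc x ((k : ℝ) / 2 ^ n) (((k : ℝ) + 1) / 2 ^ n)) ≤ K * zeta (t - s) := by
    intro k l hk hk1 hl hl1 hlts
    rcases hl.eq_or_lt with rfl | hl0
    · simp only [Real.sqrt_zero, zero_mul]
      positivity
    have hkr : (0 : ℝ) ≤ k := by exact_mod_cast hk
    have h1 := hx ((k : ℝ) / 2 ^ n) (((k : ℝ) + 1) / 2 ^ n) (by positivity)
      (by gcongr; linarith) (by rwa [div_le_one hN])
    have e : ((k : ℝ) + 1) / 2 ^ n - (k : ℝ) / 2 ^ n = 1 / 2 ^ n := by ring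
    rw [e] at h1
    have h2 : √l * zeta (1 / 2 ^ n) ≤ zeta (l * (1 / 2 ^ n)) :=
      zeta_scale hl0 hl1 (by positivity) (by rwa [div_le_one hN])
    have h3 : zeta (l * (1 / 2 ^ n)) ≤ zeta (t - s) :=
      zeta_mono (by positivity) (by rwa [mul_one_div]) (by linarith)
    calc _ ≤ √l * (K * zeta (1 / 2 ^ n)) := by gcongr
      _ = K * (√l * zeta (1 / 2 ^ n)) := by ring
      _ ≤ K * zeta (t - s) := by
        apply mul_le_mul_of_nonneg_left (h2.trans h3) hK0
  obtain ⟨k, hk⟩ : ∃ k : ℤ, ⌊(2 : ℝ) ^ n * s⌋ = k := ⟨_, rfl⟩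
  obtain ⟨m, hm⟩ : ∃ m : ℤ, ⌊(2 : ℝ) ^ n * t⌋ = m := ⟨_, rfl⟩
  obtain ⟨hk1, hk2⟩ := Int.floor_eq_iff.1 hk
  obtain ⟨hm1, hm2⟩ := Int.floor_eq_iff.1 hm
  have hst' : (2 : ℝ) ^ n * s < 2 ^ n * t := by gcongr
  have htN : (2 : ℝ) ^ n * t ≤ 2 ^ n := by nlinarith
  have hk0 : 0 ≤ k := hk ▸ Int.floor_nonneg.2 (by positivity)
  have hkm : k ≤ m := by
    rw [← hk, ← hm]
    exact Int.floor_le_floor hst'.le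
  have hkN : (k : ℝ) + 1 ≤ 2 ^ n := by
    have : (k : ℝ) < ((2 ^ n : ℤ) : ℝ) := by
      push_cast
      linarith
    have h2 : k + 1 ≤ 2 ^ n := Int.cast_lt.1 this
    exact_mod_cast h2
  rcases hkm.eq_or_lt with rfl | hlt
  · rw [inc_upsilon_same n x hk hm]
    refine (gnorm_dil_inc_le (by linarith) (by linarith) (by linarith) _).trans ?_
    have h := piece k ((2 : ℝ) ^ n * t - k - (2 ^ n * s - k)) hk0 hkN (by linarith) (by linarith)
      (by rw [div_le_iff₀ hN]; linarith)
    have := mul_nonneg hK0 hz.le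
    linarith
  · have hkm' : (k : ℝ) + 1 ≤ m := by exact_mod_cast hlt
    have hkr : (0 : ℝ) ≤ k := by exact_mod_cast hk0
    rw [inc_upsilon_ne n x hk hm]
    have g1 := (gnorm_dil_inc_le (a := (2 : ℝ) ^ n * s - k) (b := 1) (by linarith) (by linarith)
      le_rfl (inc x ((k : ℝ) / 2 ^ n) (((k : ℝ) + 1) / 2 ^ n)))
    have p1 := piece k (1 - ((2 : ℝ) ^ n * s - k)) hk0 hkN (by linarith) (by linarith)
      (by rw [div_le_iff₀ hN]; linarith)
    have g2 : gnorm (inc x (((k : ℝ) + 1) / 2 ^ n) ((m : ℝ) / 2 ^ n)) ≤ K * zeta (t - s) := by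
      rcases hkm'.eq_or_lt with he | hl
      · rw [he, inc, inv_mul_self']
        exact gnorm_one_le.trans (mul_nonneg hK0 hz.le)
      · refine (hx _ _ (by positivity) (by gcongr) (by rw [div_le_one hN]; linarith)).trans ?_
        apply mul_le_mul_of_nonneg_left _ hK0
        apply zeta_mono _ _ (by linarith)
        · rw [← sub_div]
          apply div_nonneg (by linarith) hN.le
        · rw [← sub_div, div_le_iff₀ hN]
          linarith
    have g3 : gnorm (dil ((2 : ℝ) ^ n * t - m)
        (inc x ((m : ℝ) / 2 ^ n) (((m : ℝ) + 1) / 2 ^ n))) ≤ 3 * (K * zeta (t - s)) := by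
      rcases hm1.eq_or_lt with he | hl
      -- at a dyadic point (in particular `t = 1`) the last factor is `δ_0`, whatever `x` is
      -- beyond time `1`
      · rw [← he, sub_self, dil_zero]
        have := mul_nonneg hK0 hz.le
        linarith [gnorm_one_le (d := d)]
      · have hmN : (m : ℝ) + 1 ≤ 2 ^ n := by
          have : (m : ℝ) < ((2 ^ n : ℤ) : ℝ) := by
            push_cast
            linarith
          have h2 : m + 1 ≤ 2 ^ n := Int.cast_lt.1 this
          exact_mod_cast h2
        have p3 := piece m ((2 : ℝ) ^ n * t - m) (by omega) hmN (by linarith) (by linarith)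
          (by rw [div_le_iff₀ hN]; linarith)
        have := gnorm_dil_sqrt_le (b := (2 : ℝ) ^ n * t - m) (by linarith) (by linarith)
          (inc x ((m : ℝ) / 2 ^ n) (((m : ℝ) + 1) / 2 ^ n))
        linarith
    refine (gnorm_mul_le _ _).trans ?_
    have := gnorm_mul_le (inc x (((k : ℝ) + 1) / 2 ^ n) ((m : ℝ) / 2 ^ n))
      (dil ((2 : ℝ) ^ n * t - m) (inc x ((m : ℝ) / 2 ^ n) (((m : ℝ) + 1) / 2 ^ n)))
    linarith

end PaperFV
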